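/- The XYZ theorem (Miller–Yu): Let X, Y, Z ∈ 2^ω. If X is Martin-Löf random, X ≤_T Y, and Y is Martin-Löf random relative to Z, then X is Martin-Löf random relative to Z. -/

import Mathlib

open scoped ENNReal NNReal Classical

namespace AR

/-- Elements of Cantor space `2^ω`: infinite binary sequences. -/
abbrev Seq := ℕ → Bool

/-- Finite binary strings `2^{<ω}`. -/
abbrev Str := List Bool

/-- The first `n` bits of a sequence `A`, as a finite string (`A↾n`). -/
def pre (A : Seq) (n : ℕ) : Str := List.ofFn fun i : Fin n => A i

/-- The basic clopen cylinder `[σ]` of all sequences extending `σ`. -/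
def cyl (σ : Str) : Set Seq := {A | pre A σ.length = σ}

/-- A measure on Cantor space is *fair-coin* if every cylinder `[σ]` has measure
`2^{-|σ|}`; this uniquely characterizes the usual product measure `μ` on `2^ω`. -/
def FairCoin (μ : MeasureTheory.Measure Seq) : Prop :=
  ∀ σ : Str, μ (cyl σ) = (2 : ℝ≥0∞)⁻¹ ^ σ.length

/-- A machine is a partial computable function `2^{<ω} ⇀ 2^{<ω}`. -/
def IsMachine (M : Str →. Str) : Prop := Partrec M

/-- Kolmogorov complexity of `τ` relative to the machine `M`:
`C_M(τ) = min{|σ| : M(σ)↓ = τ}`, with value `∞` if no such `σ` exists. -/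
noncomputable def Cplx (M : Str →. Str) (τ : Str) : ℕ∞ :=
  sInf ((fun σ : Str => (σ.length : ℕ∞)) '' {σ | τ ∈ M σ})

/-- A universal machine: a machine simulating every machine up to an additive
constant.  `Cplx U` for universal `U` is plain Kolmogorov complexity `C`. -/
def UniversalMachine (U : Str →. Str) : Prop :=
  IsMachine U ∧ ∀ M : Str →. Str, IsMachine M → ∃ c : ℕ, ∀ τ, Cplx U τ ≤ Cplx M τ + c

/-- A set of strings is prefix-free if none of its elements is a proper initial
segment of another. -/
def PrefixFree (S : Set Str) : Prop :=
  ∀ σ ∈ S, ∀ τ ∈ S, σ <+: τ → σ = τ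

/-- A prefix-free machine: a machine whose domain is prefix-free. -/
def PrefixFreeMachine (M : Str →. Str) : Prop :=
  IsMachine M ∧ PrefixFree {σ | (M σ).Dom}

/-- A universal prefix-free machine.  `Cplx U` for such `U` is prefix-free
Kolmogorov complexity `K`. -/
def UniversalPFMachine (U : Str →. Str) : Prop :=
  PrefixFreeMachine U ∧
    ∀ M : Str →. Str, PrefixFreeMachine M → ∃ c : ℕ, ∀ τ, Cplx U τ ≤ Cplx M τ + c

/-- A c.e. (recursively enumerable) predicate. -/
def CEPred {α} [Primcodable α] (p : α → Prop) : Prop :=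
  Partrec fun a => Part.assert (p a) fun _ => Part.some ()

/-- A Martin-Löf test: a sequence of uniformly Σ⁰₁ classes `U i`, given by a single
c.e. set `W` of pairs, with `μ (U i) ≤ 2^{-i}`. -/
def MLTest (μ : MeasureTheory.Measure Seq) (U : ℕ → Set Seq) : Prop :=
  ∃ W : Set (ℕ × Str), CEPred (· ∈ W) ∧
    (∀ i, U i = ⋃ σ ∈ {σ : Str | (i, σ) ∈ W}, cyl σ) ∧
    ∀ i, μ (U i) ≤ (2 : ℝ≥0∞)⁻¹ ^ i

/-- `A` is Martin-Löf random if it passes every Martin-Löf test. -/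
def MLRandom (μ : MeasureTheory.Measure Seq) (A : Seq) : Prop :=
  ∀ U : ℕ → Set Seq, MLTest μ U → A ∉ ⋂ i, U i

/-- Oracle partial recursion: `RecIn O f` means that the partial function
`f : ℕ ⇀ ℕ` is partial recursive relative to the oracle `O`
(Mathlib's `Nat.RecursiveIn`). -/
inductive RecIn (O : ℕ →. ℕ) : (ℕ →. ℕ) → Prop
  | zero : RecIn O (pure 0)
  | succ : RecIn O Nat.succ
  | left : RecIn O ↑fun n : ℕ => n.unpair.1
  | right : RecIn O ↑fun n : ℕ => n.unpair.2
  | oracle : RecIn O O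
  | pair {f g} : RecIn O f → RecIn O g → RecIn O fun n => Nat.pair <$> f n <*> g n
  | comp {f g} : RecIn O f → RecIn O g → RecIn O fun n => g n >>= f
  | prec {f g} : RecIn O f → RecIn O g → RecIn O (Nat.unpaired fun a n =>
      n.rec (f a) fun y IH => do let i ← IH; g (Nat.pair a (Nat.pair y i)))
  | rfind {f} : RecIn O f →
      RecIn O fun a => Nat.rfind fun n => (fun m => m = 0) <$> f (Nat.pair a n)

/-- The characteristic-function oracle associated to a sequence `A ∈ 2^ω`. -/
def oracleOf (A : Seq) : ℕ →. ℕ := fun n => Part.some (cond (A n) 1 0)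

/-- The characteristic-function oracle associated to a set of naturals. -/
noncomputable def oracleOfSet (S : Set ℕ) : ℕ →. ℕ :=
  fun n => Part.some (if n ∈ S then 1 else 0)

/-- Relative partial computability for partial functions between coded types. -/
def PartrecIn (O : ℕ →. ℕ) {α σ} [Primcodable α] [Primcodable σ] (f : α →. σ) : Prop :=
  RecIn O fun n =>
    Part.bind (Encodable.decode (α := α) n) fun a => (f a).map Encodable.encode

/-- A predicate is c.e. relative to the oracle `O`. -/
def CEPredIn (O : ℕ →. ℕ) {α} [Primcodable α] (p : α → Prop) : Prop :=
  PartrecIn O fun a => Part.assert (p a) fun _ => Part.some ()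

/-- Turing reducibility between oracles: `f` is recursive in `g`. -/
def TuringLE (f g : ℕ →. ℕ) : Prop := RecIn g f

/-- Turing reducibility `B ≤_T A` between sequences. -/
def SeqTuringLE (B A : Seq) : Prop := TuringLE (oracleOf B) (oracleOf A)

/-- The `e`-th partial computable function `φ_e`, via Mathlib's standard
enumeration of codes for the partial recursive functions. -/
def phi (e : ℕ) : ℕ →. ℕ := (Denumerable.ofNat Nat.Partrec.Code e).eval

/-- The halting problem `∅' = {e : φ_e(e)↓}`. -/
def haltingSet : Set ℕ := {e | (phi e e).Dom}

/-- A Martin-Löf test relative to the oracle `O`. -/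
def MLTestIn (O : ℕ →. ℕ) (μ : MeasureTheory.Measure Seq) (U : ℕ → Set Seq) : Prop :=
  ∃ W : Set (ℕ × Str), CEPredIn O (· ∈ W) ∧
    (∀ i, U i = ⋃ σ ∈ {σ : Str | (i, σ) ∈ W}, cyl σ) ∧
    ∀ i, μ (U i) ≤ (2 : ℝ≥0∞)⁻¹ ^ i

/-- Martin-Löf randomness relative to the oracle `O`. -/
def MLRandomIn (O : ℕ →. ℕ) (μ : MeasureTheory.Measure Seq) (A : Seq) : Prop :=
  ∀ U : ℕ → Set Seq, MLTestIn O μ U → A ∉ ⋂ i, U i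

/-! ### Initial segments and cylinders -/

theorem pre_length (A : Seq) (n : ℕ) : (pre A n).length = n := by simp [pre]

theorem pre_succ (A : Seq) (n : ℕ) : pre A (n + 1) = pre A n ++ [A n] := by
  rw [pre, List.ofFn_succ_last]
  rfl

theorem pre_prefix_pre (A : Seq) {m n : ℕ} (h : m ≤ n) : pre A m <+: pre A n := by
  induction n, h using Nat.le_induction with
  | base => exact List.prefix_rfl
  | succ n _ ih => exact ih.trans (pre_succ A n ▸ List.prefix_append _ _)

theorem take_pre (A : Seq) {m n : ℕ} (h : m ≤ n) : (pre A n).take m = pre A m := by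
  have := (List.prefix_iff_eq_take.1 (pre_prefix_pre A h)).symm
  rwa [pre_length] at this

theorem getElem?_pre (A : Seq) {i n : ℕ} (h : i < n) : (pre A n)[i]? = some (A i) := by
  simp [pre, h]

theorem mem_cyl {A : Seq} {σ : Str} : A ∈ cyl σ ↔ pre A σ.length = σ := Iff.rfl

theorem mem_cyl_pre (A : Seq) (n : ℕ) : A ∈ cyl (pre A n) := by
  rw [mem_cyl, pre_length]

/-- Two strings with a common extension are comparable. -/
theorem prefix_or_prefix_of_mem_cyl {A : Seq} {σ τ : Str} (hσ : A ∈ cyl σ) (hτ : A ∈ cyl τ) :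
    σ <+: τ ∨ τ <+: σ := by
  rw [mem_cyl] at hσ hτ
  rw [← hσ, ← hτ]
  exact (le_total _ _).imp (pre_prefix_pre A) (pre_prefix_pre A)

/-! ### The use principle -/

/-- `F` is a Turing functional, given by its values on finite oracles, that computes `f` from the
oracle `A`. -/
structure Computes (F : Str → ℕ →. ℕ) (A : Seq) (f : ℕ →. ℕ) : Prop where
  partrec : Partrec₂ F
  mono : ∀ {ρ ρ' : Str}, ρ <+: ρ' → ∀ {n m}, m ∈ F ρ n → m ∈ F ρ' n
  mem_iff : ∀ n m, m ∈ f n ↔ ∃ k, m ∈ F (pre A k) n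

theorem Computes.mono_pre {F A f} (h : Computes F A f) {k l : ℕ} (hkl : k ≤ l) {n m : ℕ}
    (hm : m ∈ F (pre A k) n) : m ∈ F (pre A l) n :=
  h.mono (pre_prefix_pre A hkl) hm

theorem computes_of_partrec (A : Seq) {f : ℕ →. ℕ} (hf : Nat.Partrec f) :
    Computes (fun _ => f) A f :=
  ⟨(Partrec.nat_iff.2 hf).comp Computable.snd, fun _ _ _ h => h, fun _ _ => by simp⟩

theorem computes_oracle (A : Seq) :
    Computes (fun ρ n => (ρ[n]?.map fun b => cond b 1 0 : Option ℕ)) A (oracleOf A) where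
  partrec := by
    refine Computable.ofOption (Computable.option_map Computable.list_getElem? ?_)
    exact Computable.cond Computable.snd (Computable.const 1) (Computable.const 0)
  mono := by
    rintro ρ _ ⟨τ, rfl⟩ n m h
    simp only [Part.mem_ofOption, Option.mem_def, Option.map_eq_some_iff] at h ⊢
    obtain ⟨b, hb, rfl⟩ := h
    obtain ⟨hn, -⟩ := List.getElem?_eq_some_iff.1 hb
    exact ⟨b, by rw [List.getElem?_append_left hn, hb], rfl⟩
  mem_iff n m := by
    simp only [oracleOf, Part.mem_some_iff, Part.mem_ofOption, Option.mem_def,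
      Option.map_eq_some_iff]
    constructor
    · rintro rfl
      exact ⟨n + 1, A n, getElem?_pre A n.lt_succ_self, rfl⟩
    · rintro ⟨k, b, hb, rfl⟩
      obtain ⟨hn, -⟩ := List.getElem?_eq_some_iff.1 hb
      rw [pre_length] at hn
      rw [getElem?_pre A hn, Option.some_inj] at hb
      rw [hb]

theorem mem_pair_seq {a b : Part ℕ} {m : ℕ} :
    m ∈ (Nat.pair <$> a <*> b) ↔ ∃ x ∈ a, ∃ y ∈ b, Nat.pair x y = m := by
  simp [Seq.seq]

theorem Computes.pair {F G A f g} (hf : Computes F A f) (hg : Computes G A g) :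
    Computes (fun ρ n => Nat.pair <$> F ρ n <*> G ρ n) A
      (fun n => Nat.pair <$> f n <*> g n) where
  partrec := by
    have : Partrec fun p : Str × ℕ =>
        (F p.1 p.2).bind fun x => (G p.1 p.2).map fun y => Nat.pair x y := by
      refine Partrec.bind hf.partrec (Partrec.map ?_ ?_)
      · exact (show Partrec fun p : Str × ℕ => G p.1 p.2 from hg.partrec).comp Computable.fst
      · exact (Primrec₂.natPair.comp (Primrec.snd.comp Primrec.fst) Primrec.snd).to_comp
    refine Partrec.of_eq this fun p => ?_
    ext m
    rw [mem_pair_seq]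
    simp
  mono h n m := by
    simp only [mem_pair_seq]
    rintro ⟨x, hx, y, hy, rfl⟩
    exact ⟨x, hf.mono h hx, y, hg.mono h hy, rfl⟩
  mem_iff n m := by
    simp only [mem_pair_seq, hf.mem_iff, hg.mem_iff]
    constructor
    · rintro ⟨x, ⟨k, hk⟩, y, ⟨l, hl⟩, rfl⟩
      exact ⟨max k l, x, hf.mono_pre (le_max_left _ _) hk, y, hg.mono_pre (le_max_right _ _) hl,
        rfl⟩
    · rintro ⟨k, x, hx, y, hy, rfl⟩
      exact ⟨x, ⟨k, hx⟩, y, ⟨k, hy⟩, rfl⟩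

theorem Computes.comp {F G A f g} (hf : Computes F A f) (hg : Computes G A g) :
    Computes (fun ρ n => (G ρ n).bind (F ρ)) A (fun n => g n >>= f) where
  partrec := by
    refine Partrec.bind hg.partrec ?_
    exact (show Partrec fun p : Str × ℕ => F p.1 p.2 from hf.partrec).comp
      ((Computable.fst.comp Computable.fst).pair Computable.snd)
  mono h n m hm := by
    obtain ⟨x, hx, hm⟩ := Part.mem_bind_iff.1 hm
    exact Part.mem_bind_iff.2 ⟨x, hg.mono h hx, hf.mono h hm⟩
  mem_iff n m := by
    refine Part.mem_bind_iff.trans ?_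
    simp only [hf.mem_iff, hg.mem_iff]
    refine Iff.trans ?_ (exists_congr fun k => Part.mem_bind_iff.symm)
    constructor
    · rintro ⟨x, ⟨k, hk⟩, ⟨l, hl⟩⟩
      exact ⟨max k l, x, hg.mono_pre (le_max_left _ _) hk, hf.mono_pre (le_max_right _ _) hl⟩
    · rintro ⟨k, x, hx, hm⟩
      exact ⟨x, ⟨k, hx⟩, k, hm⟩

/-- Primitive recursion from the base case `f` with step `g`. -/
def precRec (f g : ℕ →. ℕ) (a n : ℕ) : Part ℕ :=
  n.rec (f a) fun y IH => do let i ← IH; g (Nat.pair a (Nat.pair y i))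

theorem mem_precRec_succ {f g : ℕ →. ℕ} {a n m : ℕ} :
    m ∈ precRec f g a (n + 1) ↔ ∃ i ∈ precRec f g a n, m ∈ g (Nat.pair a (Nat.pair n i)) := by
  simp [precRec]

theorem Computes.prec {F G A f g} (hf : Computes F A f) (hg : Computes G A g) :
    Computes (fun ρ => Nat.unpaired (precRec (F ρ) (G ρ))) A (Nat.unpaired (precRec f g)) where
  partrec := by
    have hF : Partrec fun p : Str × ℕ => F p.1 p.2 := hf.partrec
    have hG : Partrec fun p : Str × ℕ => G p.1 p.2 := hg.partrec
    have hl : Computable fun p : Str × ℕ => p.2.unpair.1 :=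
      (Primrec.fst.comp (Primrec.unpair.comp Primrec.snd)).to_comp
    have hr : Computable fun p : Str × ℕ => p.2.unpair.2 :=
      (Primrec.snd.comp (Primrec.unpair.comp Primrec.snd)).to_comp
    have hpair : Computable₂ Nat.pair := Primrec₂.natPair.to_comp
    refine Partrec.of_eq (Partrec.nat_rec hr (hF.comp (Computable.fst.pair hl))
      (h := fun p q => G p.1 (Nat.pair p.2.unpair.1 (Nat.pair q.1 q.2))) ?_) fun p => rfl
    refine hG.comp (g := fun q : (Str × ℕ) × ℕ × ℕ =>
      (q.1.1, Nat.pair q.1.2.unpair.1 (Nat.pair q.2.1 q.2.2)))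
      ((Computable.fst.comp Computable.fst).pair ?_)
    exact hpair.comp (hl.comp Computable.fst)
      (hpair.comp (Computable.fst.comp Computable.snd) (Computable.snd.comp Computable.snd))
  mono {ρ ρ'} h p m := by
    simp only [Nat.unpaired]
    generalize p.unpair.1 = a, p.unpair.2 = n
    induction n generalizing m with
    | zero => exact hf.mono h
    | succ n ih =>
      simp only [mem_precRec_succ]
      rintro ⟨i, hi, hm⟩
      exact ⟨i, ih i hi, hg.mono h hm⟩
  mem_iff p m := by
    simp only [Nat.unpaired]
    generalize p.unpair.1 = a, p.unpair.2 = n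
    have mono : ∀ n {k l : ℕ}, k ≤ l → ∀ {m},
        m ∈ precRec (F (pre A k)) (G (pre A k)) a n →
          m ∈ precRec (F (pre A l)) (G (pre A l)) a n := by
      intro n k l hkl
      induction n with
      | zero => exact hf.mono_pre hkl
      | succ n ih =>
        simp only [mem_precRec_succ]
        rintro m ⟨i, hi, hm⟩
        exact ⟨i, ih hi, hg.mono_pre hkl hm⟩
    induction n generalizing m with
    | zero => exact hf.mem_iff a m
    | succ n ih =>
      simp only [mem_precRec_succ, ih, hg.mem_iff]
      constructor
      · rintro ⟨i, ⟨k, hk⟩, ⟨l, hl⟩⟩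
        exact ⟨max k l, i, mono n (le_max_left _ _) hk, hg.mono_pre (le_max_right _ _) hl⟩
      · rintro ⟨k, i, hi, hm⟩
        exact ⟨i, ⟨k, hi⟩, k, hm⟩

theorem mem_rfind_eq_zero {f : ℕ →. ℕ} {m : ℕ} :
    m ∈ Nat.rfind (fun n => (fun x => decide (x = 0)) <$> f n) ↔
      0 ∈ f m ∧ ∀ j < m, ∃ x ∈ f j, x ≠ 0 := by
  refine Nat.mem_rfind.trans ?_
  simp

theorem Computes.rfind {F A f} (hf : Computes F A f) :
    Computes (fun ρ a => Nat.rfind fun n => (fun m => decide (m = 0)) <$> F ρ (Nat.pair a n)) A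
      (fun a => Nat.rfind fun n => (fun m => decide (m = 0)) <$> f (Nat.pair a n)) where
  partrec := by
    have hF : Partrec fun p : Str × ℕ => F p.1 p.2 := hf.partrec
    refine Partrec.rfind (Partrec.map (hF.comp
      (g := fun q : (Str × ℕ) × ℕ => (q.1.1, Nat.pair q.1.2 q.2)) ?_) ?_)
    · exact ((Primrec.fst.comp Primrec.fst).pair
        (Primrec₂.natPair.comp (Primrec.snd.comp Primrec.fst) Primrec.snd)).to_comp
    · exact (Primrec.eq.decide.comp Primrec.snd (Primrec.const 0)).to_comp
  mono h n m := by
    simp only [mem_rfind_eq_zero (f := fun x => F _ (Nat.pair n x))]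
    rintro ⟨h0, hlt⟩
    refine ⟨hf.mono h h0, fun j hj => ?_⟩
    obtain ⟨x, hx, hx0⟩ := hlt j hj
    exact ⟨x, hf.mono h hx, hx0⟩
  mem_iff a m := by
    simp only [mem_rfind_eq_zero (f := fun x => F _ (Nat.pair a x)),
      mem_rfind_eq_zero (f := fun x => f (Nat.pair a x)), hf.mem_iff]
    constructor
    · rintro ⟨⟨k, hk⟩, hlt⟩
      have : ∀ j, ∃ l, j < m → ∃ x ∈ F (pre A l) (Nat.pair a j), x ≠ 0 := by
        intro j
        by_cases hj : j < m
        · obtain ⟨x, ⟨l, hl⟩, hx⟩ := hlt j hj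
          exact ⟨l, fun _ => ⟨x, hl, hx⟩⟩
        · exact ⟨0, fun h => absurd h hj⟩
      choose l hl using this
      refine ⟨max k ((Finset.range m).sup l), hf.mono_pre (le_max_left _ _) hk, fun j hj => ?_⟩
      obtain ⟨x, hx, hx0⟩ := hl j hj
      exact ⟨x, hf.mono_pre
        ((Finset.le_sup (Finset.mem_range.2 hj)).trans (le_max_right _ _)) hx, hx0⟩
    · rintro ⟨k, h0, hlt⟩
      refine ⟨⟨k, h0⟩, fun j hj => ?_⟩
      obtain ⟨x, hx, hx0⟩ := hlt j hj
      exact ⟨x, ⟨k, hx⟩, hx0⟩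

theorem RecIn.exists_computes {A : Seq} {f : ℕ →. ℕ} (hf : RecIn (oracleOf A) f) :
    ∃ F, Computes F A f := by
  induction hf with
  | zero => exact ⟨_, computes_of_partrec A .zero⟩
  | succ => exact ⟨_, computes_of_partrec A .succ⟩
  | left => exact ⟨_, computes_of_partrec A .left⟩
  | right => exact ⟨_, computes_of_partrec A .right⟩
  | oracle => exact ⟨_, computes_oracle A⟩
  | pair _ _ ihf ihg =>
    obtain ⟨⟨F, hF⟩, ⟨G, hG⟩⟩ := And.intro ihf ihg
    exact ⟨_, hF.pair hG⟩
  | comp _ _ ihf ihg =>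
    obtain ⟨⟨F, hF⟩, ⟨G, hG⟩⟩ := And.intro ihf ihg
    exact ⟨_, hF.comp hG⟩
  | prec _ _ ihf ihg =>
    obtain ⟨⟨F, hF⟩, ⟨G, hG⟩⟩ := And.intro ihf ihg
    exact ⟨_, hF.prec hG⟩
  | rfind _ ihf =>
    obtain ⟨F, hF⟩ := ihf
    exact ⟨_, hF.rfind⟩

/-! ### Primitive recursive approximations -/

theorem primrecPred_exists_lt {α : Type*} [Primcodable α] {R : ℕ → α → Prop} (hR : PrimrecRel R)
    {f : α → ℕ} (hf : Primrec f) : PrimrecPred fun a => ∃ x < f a, R x a :=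
  (hR.exists_mem_list.comp (Primrec.list_range.comp hf) Primrec.id).of_eq (by simp)

theorem primrecPred_forall_lt {α : Type*} [Primcodable α] {R : ℕ → α → Prop} (hR : PrimrecRel R)
    {f : α → ℕ} (hf : Primrec f) : PrimrecPred fun a => ∀ x < f a, R x a :=
  (hR.forall_mem_list.comp (Primrec.list_range.comp hf) Primrec.id).of_eq (by simp)

open Encodable Nat.Partrec in
/-- A partial function recursive in `A` has a primitive recursive approximation: `G ρ (n, m)` says
that the computation with input `n` halts with output `m` within the resources given by `ρ`. -/
theorem RecIn.exists_approx {A : Seq} {f : ℕ →. ℕ} (hf : RecIn (oracleOf A) f) :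
    ∃ G : Str → ℕ × ℕ → Prop, PrimrecRel G ∧
      (∀ {ρ ρ' : Str}, ρ <+: ρ' → ∀ {p}, G ρ p → G ρ' p) ∧
      (∀ {ρ n m m'}, G ρ (n, m) → G ρ (n, m') → m = m') ∧
      ∀ n m, m ∈ f n ↔ ∃ k, G (pre A k) (n, m) := by
  obtain ⟨F, hF⟩ := hf.exists_computes
  obtain ⟨c, hc⟩ := Code.exists_code.1 hF.partrec
  have eval_c (ρ : Str) (n : ℕ) : c.eval (encode (ρ, n)) = F ρ n := by
    rw [hc]
    simp [Part.map_id']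
  have sound {ρ : Str} {s j n m : ℕ} (h : c.evaln s (encode (ρ.take j, n)) = some m) :
      m ∈ F ρ n :=
    hF.mono (List.take_prefix j ρ) (eval_c _ n ▸ Code.evaln_sound h)
  refine ⟨fun ρ p => ∃ j < ρ.length + 1, c.evaln ρ.length (encode (ρ.take j, p.1)) = some p.2,
    ?_, ?_, ?_, ?_⟩
  · have hR : PrimrecRel fun (j : ℕ) (q : Str × ℕ × ℕ) =>
        c.evaln q.1.length (encode (q.1.take j, q.2.1)) = some q.2.2 := by
      refine Primrec.eq.comp (Code.primrec_evaln.comp (g := fun r : ℕ × Str × ℕ × ℕ =>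
        ((r.2.1.length, c), encode (r.2.1.take r.1, r.2.2.1))) ?_) ?_
      · refine ((Primrec.list_length.comp (Primrec.fst.comp Primrec.snd)).pair
          (Primrec.const c)).pair (Primrec.encode.comp ?_)
        exact (Primrec.list_take.comp Primrec.fst (Primrec.fst.comp Primrec.snd)).pair
          (Primrec.fst.comp (Primrec.snd.comp Primrec.snd))
      · exact Primrec.option_some.comp (Primrec.snd.comp (Primrec.snd.comp Primrec.snd))
    exact primrecPred_exists_lt hR (Primrec.succ.comp (Primrec.list_length.comp Primrec.fst))
  · rintro ρ _ ⟨τ, rfl⟩ p ⟨j, hj, h⟩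
    refine ⟨j, by rw [List.length_append]; omega, ?_⟩
    rw [List.take_append_of_le_length (by omega)]
    exact Code.evaln_mono (by simp) h
  · rintro ρ n m m' ⟨j, -, h⟩ ⟨j', -, h'⟩
    exact Part.mem_unique (sound h) (sound h')
  · intro n m
    rw [hF.mem_iff]
    constructor
    · rintro ⟨k, hk⟩
      obtain ⟨s, hs⟩ := Code.evaln_complete.1 (eval_c _ n ▸ hk)
      refine ⟨max k s, k, by rw [pre_length]; omega, ?_⟩
      rw [pre_length, take_pre A (le_max_left k s)]
      exact Code.evaln_mono (le_max_right k s) hs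
    · rintro ⟨k, j, -, h⟩
      exact ⟨k, sound h⟩

theorem rfind_some_dom {b : ℕ → Bool} :
    (Nat.rfind fun s => Part.some (b s)).Dom ↔ ∃ s, b s = true :=
  Nat.rfind_dom.trans (by
    simp only [Part.mem_some_iff, Part.some_dom, implies_true, and_true, eq_comm])

theorem cePred_of_exists {α : Type*} [Primcodable α] {p : α → Prop} {R : α → ℕ → Prop}
    (hR : PrimrecRel R) (h : ∀ a, p a ↔ ∃ s, R a s) : CEPred p := by
  have hf : Partrec fun a => Nat.rfind fun s => Part.some (decide (R a s)) :=
    Partrec.rfind (Computable.partrec hR.decide.to_comp)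
  refine REPred.of_eq (Partrec.dom_re hf) fun a => ?_
  rw [h]
  exact rfind_some_dom.trans (by simp)

theorem RecIn.of_eq {O f g : ℕ →. ℕ} (hf : RecIn O f) (h : ∀ n, f n = g n) : RecIn O g :=
  (funext h : f = g) ▸ hf

theorem RecIn.of_partrec {O f : ℕ →. ℕ} (hf : Nat.Partrec f) : RecIn O f := by
  induction hf with
  | zero => exact .zero
  | succ => exact .succ
  | left => exact .left
  | right => exact .right
  | pair _ _ ihf ihg => exact .pair ihf ihg
  | comp _ _ ihf ihg => exact .comp ihf ihg
  | prec _ _ ihf ihg => exact .prec ihf ihg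
  | rfind _ ihf => exact .rfind ihf

theorem RecIn.of_primrec {O : ℕ →. ℕ} {f : ℕ → ℕ} (hf : Primrec f) :
    RecIn O (fun n => Part.some (f n)) :=
  .of_partrec (Nat.Partrec.of_primrec (Primrec.nat_iff.1 hf))

theorem RecIn.pair_some {O : ℕ →. ℕ} {f g : ℕ → ℕ} (hf : RecIn O fun n => Part.some (f n))
    (hg : RecIn O fun n => Part.some (g n)) :
    RecIn O fun n => Part.some (Nat.pair (f n) (g n)) := by
  refine (hf.pair hg).of_eq fun n => ?_
  simp [Seq.seq]

theorem RecIn.comp_some {O : ℕ →. ℕ} {f g : ℕ → ℕ} (hf : RecIn O fun n => Part.some (f n))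
    (hg : RecIn O fun n => Part.some (g n)) : RecIn O fun n => Part.some (f (g n)) := by
  refine (hf.comp hg).of_eq fun n => ?_
  simp

open Encodable in
theorem recIn_encode_pre (A : Seq) :
    RecIn (oracleOf A) fun k => Part.some (encode (pre A k)) := by
  let app (i : ℕ) : ℕ := encode (((decode (α := Str) i.unpair.1).getD []) ++ [i.unpair.2 == 1])
  have happ : Primrec app := by
    refine Primrec.encode.comp (Primrec.list_append.comp (Primrec.option_getD.comp
      (Primrec.decode.comp (Primrec.fst.comp Primrec.unpair)) (Primrec.const [])) ?_)
    exact Primrec.list_cons.comp (Primrec.beq.comp (Primrec.snd.comp Primrec.unpair)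
      (Primrec.const 1)) (Primrec.const [])
  have hy : Primrec fun n : ℕ => n.unpair.2.unpair.1 :=
    Primrec.fst.comp (Primrec.unpair.comp (Primrec.snd.comp Primrec.unpair))
  have hi : Primrec fun n : ℕ => n.unpair.2.unpair.2 :=
    Primrec.snd.comp (Primrec.unpair.comp (Primrec.snd.comp Primrec.unpair))
  have hO : RecIn (oracleOf A) fun n => Part.some (cond (A n) 1 0) := .oracle
  have step := RecIn.comp_some (.of_primrec happ)
    (RecIn.pair_some (.of_primrec hi) (RecIn.comp_some hO (.of_primrec hy)))
  have hrec := (RecIn.of_primrec (Primrec.const (encode ([] : Str)))).prec step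
  have hpair : RecIn (oracleOf A) fun n => Part.some (Nat.pair 0 n) :=
    .of_primrec (Primrec₂.natPair.comp (Primrec.const 0) Primrec.id)
  refine (hrec.comp hpair).of_eq fun k => ?_
  simp only [Part.bind_eq_bind, Part.bind_some, Nat.unpaired, Nat.unpair_pair]
  induction k with
  | zero => rfl
  | succ k ih =>
    simp only [ih, Part.bind_some]
    simp only [Nat.unpair_pair, app, encodek, Option.getD_some]
    rw [pre_succ]
    cases A k <;> rfl

open Encodable in
theorem cePredIn_of_exists {α : Type*} [Primcodable α] {A : Seq} {p : α → Prop}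
    {R : Str → α → Prop} (hR : PrimrecRel R) (h : ∀ a, p a ↔ ∃ k, R (pre A k) a) :
    CEPredIn (oracleOf A) p := by
  let D (a : α) (ζ : Str) : Bool := decide (R ζ a)
  have hD : Primrec₂ D := hR.decide.swap
  let t (i : ℕ) : ℕ :=
    Option.casesOn ((decode (α := α) i.unpair.1).bind fun a =>
      (decode (α := Str) i.unpair.2).map (D a)) 1 fun b => cond b 0 1
  have ht : Primrec t := by
    refine Primrec.option_casesOn (Primrec.option_bind
      (Primrec.decode.comp (Primrec.fst.comp Primrec.unpair)) ?_) (Primrec.const 1) ?_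
    · refine Primrec.option_map (Primrec.decode.comp
        (Primrec.snd.comp (Primrec.unpair.comp Primrec.fst))) ?_
      exact hD.comp (Primrec.snd.comp Primrec.fst) Primrec.snd
    · exact Primrec.cond Primrec.snd (Primrec.const 0) (Primrec.const 1)
  have hleft : RecIn (oracleOf A) fun n => Part.some n.unpair.1 :=
    .of_primrec (Primrec.fst.comp Primrec.unpair)
  have hright : RecIn (oracleOf A) fun n => Part.some n.unpair.2 :=
    .of_primrec (Primrec.snd.comp Primrec.unpair)
  have hsearch := (RecIn.comp_some (.of_primrec ht)
    (RecIn.pair_some hleft ((recIn_encode_pre A).comp_some hright))).rfind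
  have hzero : RecIn (oracleOf A) fun _ => Part.some 0 := .of_primrec (Primrec.const 0)
  unfold CEPredIn PartrecIn
  refine (hzero.comp hsearch).of_eq fun n => ?_
  simp only [Nat.unpair_pair, Part.map_eq_map, Part.map_some]
  refine Part.ext' ?_ ?_
  · refine Iff.trans (b := ∃ k, t (Nat.pair n (encode (pre A k))) = 0) ?_ ?_
    · simp only [Part.bind_eq_bind, Part.bind_dom, Part.some_dom, exists_prop, and_true]
      exact rfind_some_dom.trans (by simp)
    · rcases hn : decode (α := α) n with - | a
      · simp [t, hn]
      · simp [t, hn, D, h, Part.assert, Bool.cond_eq_ite]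
  · intro h₁ h₂
    rfl
/-! ### Reductions between sequences -/

/-- `H ρ σ` approximates a Turing reduction: from the finite oracle `ρ` one computes, within the
resources given by `ρ`, an output extending `σ`. -/
structure IsReduction (H : Str → Str → Prop) : Prop where
  primrec : PrimrecRel H
  mono : ∀ {ρ ρ' : Str}, ρ <+: ρ' → ∀ {σ}, H ρ σ → H ρ' σ
  consistent : ∀ {ρ σ τ}, H ρ σ → H ρ τ → σ <+: τ ∨ τ <+: σ

theorem SeqTuringLE.exists_isReduction {X Y : Seq} (h : SeqTuringLE X Y) :
    ∃ H, IsReduction H ∧ ∀ n, ∃ k, H (pre Y k) (pre X n) := by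
  obtain ⟨G, hG, mono, functional, spec⟩ := RecIn.exists_approx h
  refine ⟨fun ρ σ => ∀ i < σ.length, G ρ (i, cond (σ.getD i false) 1 0), ⟨?_, ?_, ?_⟩, ?_⟩
  · have hR : PrimrecRel fun (i : ℕ) (q : Str × Str) =>
        G q.1 (i, cond (q.2.getD i false) 1 0) := by
      refine hG.comp (Primrec.fst.comp Primrec.snd) (Primrec.fst.pair (Primrec.cond ?_
        (Primrec.const 1) (Primrec.const 0)))
      exact (Primrec.list_getD false).comp (Primrec.snd.comp Primrec.snd) Primrec.fst
    exact primrecPred_forall_lt hR (Primrec.list_length.comp Primrec.snd)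
  · exact fun h _ hσ i hi => mono h (hσ i hi)
  · have key {ρ σ τ : Str} (hl : σ.length ≤ τ.length)
        (hσ : ∀ i < σ.length, G ρ (i, cond (σ.getD i false) 1 0))
        (hτ : ∀ i < τ.length, G ρ (i, cond (τ.getD i false) 1 0)) : σ <+: τ := by
      refine List.prefix_iff_getElem?.2 fun i hi => ?_
      have := functional (hσ i hi) (hτ i (hi.trans_le hl))
      rw [List.getD_eq_getElem _ _ hi, List.getD_eq_getElem _ _ (hi.trans_le hl)] at this
      rw [List.getElem?_eq_getElem (hi.trans_le hl), Option.some_inj]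
      revert this
      cases σ[i] <;> cases τ[i] <;> simp
    intro ρ σ τ hσ hτ
    exact (le_total σ.length τ.length).imp (key · hσ hτ) (key · hτ hσ)
  · intro n
    have (i : ℕ) : ∃ k, G (pre Y k) (i, cond (X i) 1 0) :=
      (spec _ _).1 (Part.mem_some _)
    choose k hk using this
    refine ⟨(Finset.range n).sup k, fun i hi => ?_⟩
    rw [pre_length] at hi
    rw [List.getD_eq_getElem?_getD, getElem?_pre X hi]
    exact mono (pre_prefix_pre Y (Finset.le_sup (Finset.mem_range.2 hi))) (hk i)

/-- The list of all binary strings of length `n`. -/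
def strs (n : ℕ) : List Str :=
  n.rec [[]] fun _ L => L.flatMap fun σ => [false :: σ, true :: σ]

theorem strs_succ (n : ℕ) : strs (n + 1) = (strs n).flatMap fun σ => [false :: σ, true :: σ] := rfl

theorem primrec_strs : Primrec strs := by
  refine Primrec.nat_rec₁ _ (Primrec.list_flatMap Primrec.snd ?_)
  have hcons (b : Bool) : Primrec fun p : (ℕ × List Str) × Str => b :: p.2 :=
    Primrec.list_cons.comp (Primrec.const b) Primrec.snd
  exact Primrec.list_cons.comp (hcons false)
    (Primrec.list_cons.comp (hcons true) (Primrec.const []))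

theorem mem_strs {n : ℕ} {σ : Str} : σ ∈ strs n ↔ σ.length = n := by
  induction n generalizing σ with
  | zero => simp [strs]
  | succ n ih =>
    rw [strs_succ]
    cases σ with
    | nil => simp
    | cons b σ => cases b <;> simp [ih]

theorem nodup_strs (n : ℕ) : (strs n).Nodup := by
  induction n with
  | zero => simp [strs]
  | succ n ih =>
    rw [strs_succ, List.nodup_flatMap]
    refine ⟨fun σ _ => by simp, ih.imp fun {σ τ} h => ?_⟩
    simp [Function.onFun, Ne.symm h]

/-- The number of strings of length `s` from which `H` computes an extension of `σ`. -/
noncomputable def preimageCount (H : Str → Str → Prop) (s : ℕ) (σ : Str) : ℕ :=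
  ((strs s).filter fun ρ => H ρ σ).length

/-- At stage `s` the preimage of `σ` under `H` has measure more than `2^{c-|σ|}`. -/
def Heavy (H : Str → Str → Prop) (c s : ℕ) (σ : Str) : Prop :=
  2 ^ s * 2 ^ c < preimageCount H s σ * 2 ^ σ.length

theorem primrec_two_pow : Primrec fun n : ℕ => 2 ^ n :=
  (Primrec.nat_rec₁ 1 (f := fun _ x => x * 2)
    (Primrec.nat_mul.comp Primrec.snd (Primrec.const 2))).of_eq fun n => by
      induction n with
      | zero => rfl
      | succ n ih => rw [pow_succ, ← ih]

theorem IsReduction.primrec_heavy {H : Str → Str → Prop} (hH : IsReduction H) :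
    PrimrecPred fun p : ℕ × ℕ × Str => Heavy H p.1 p.2.1 p.2.2 := by
  have hs : Primrec fun p : ℕ × ℕ × Str => p.2.1 := Primrec.fst.comp Primrec.snd
  have hσ : Primrec fun p : ℕ × ℕ × Str => p.2.2 := Primrec.snd.comp Primrec.snd
  refine Primrec.nat_lt.comp (Primrec.nat_mul.comp (primrec_two_pow.comp hs)
    (primrec_two_pow.comp Primrec.fst)) (Primrec.nat_mul.comp (Primrec.list_length.comp ?_)
    (primrec_two_pow.comp (Primrec.list_length.comp hσ)))
  exact hH.primrec.listFilter.comp (primrec_strs.comp hs) hσ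

/-! ### Measure -/

/-- The strings in `S` none of whose proper initial segments are in `S`. -/
def minimals (S : Set Str) : Set Str := {σ | σ ∈ S ∧ ∀ n < σ.length, σ.take n ∉ S}

theorem eq_of_prefix_of_mem_minimals {S : Set Str} {σ τ : Str} (hσ : σ ∈ minimals S)
    (hτ : τ ∈ minimals S) (h : σ <+: τ) : σ = τ := by
  rw [List.prefix_iff_eq_take] at h
  refine h.trans (List.take_of_length_le (not_lt.1 fun hl => hτ.2 _ hl (h ▸ hσ.1)))

theorem exists_pre_mem_minimals {S : Set Str} {A : Seq} (h : ∃ σ ∈ S, A ∈ cyl σ) :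
    ∃ n, pre A n ∈ minimals S := by
  have h' : ∃ n, pre A n ∈ S := by
    obtain ⟨σ, hσ, hA⟩ := h
    exact ⟨σ.length, (mem_cyl.1 hA).symm ▸ hσ⟩
  refine ⟨Nat.find h', Nat.find_spec h', fun n hn => ?_⟩
  rw [pre_length] at hn
  rw [take_pre A hn.le]
  exact Nat.find_min h' hn

theorem disjoint_cyl_of_mem_minimals {S : Set Str} :
    (minimals S).PairwiseDisjoint cyl := by
  intro σ hσ τ hτ hne
  refine Set.disjoint_left.2 fun A hA hA' => hne ?_
  rcases prefix_or_prefix_of_mem_cyl hA hA' with h | h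
  · exact eq_of_prefix_of_mem_minimals hσ hτ h
  · exact (eq_of_prefix_of_mem_minimals hτ hσ h).symm

theorem measurable_pre (n : ℕ) (S : Set Str) : MeasurableSet {A : Seq | pre A n ∈ S} := by
  have hm : Measurable fun (A : Seq) (i : Fin n) => A i :=
    measurable_pi_lambda _ fun i => measurable_pi_apply _
  exact hm (t := {f | List.ofFn f ∈ S}) (Set.toFinite _).measurableSet

theorem measurableSet_cyl (σ : Str) : MeasurableSet (cyl σ) := measurable_pre σ.length {σ}

section Measure

variable {μ : MeasureTheory.Measure Seq}

theorem FairCoin.measure_univ (hμ : FairCoin μ) : μ Set.univ = 1 := by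
  have : cyl [] = Set.univ := by
    ext A
    simp [mem_cyl, pre]
  simpa [this] using hμ []

/-- The sequences whose first `s` bits suffice to compute an extension of `σ`. -/
def preimage (H : Str → Str → Prop) (s : ℕ) (σ : Str) : Set Seq := {A | H (pre A s) σ}

theorem FairCoin.measure_preimage (hμ : FairCoin μ) (H : Str → Str → Prop) (s : ℕ) (σ : Str) :
    μ (preimage H s σ) = preimageCount H s σ * 2⁻¹ ^ s := by
  set L := (strs s).filter fun ρ => H ρ σ with hL
  have mem_L {ρ : Str} : ρ ∈ L.toFinset ↔ ρ.length = s ∧ H ρ σ := by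
    simp [hL, mem_strs]
  have heq : preimage H s σ = ⋃ ρ ∈ L.toFinset, cyl ρ := by
    ext A
    simp only [Set.mem_iUnion, mem_L, exists_prop, preimage, Set.mem_ofPred_eq]
    constructor
    · exact fun h => ⟨pre A s, ⟨pre_length A s, h⟩, mem_cyl_pre A s⟩
    · rintro ⟨ρ, ⟨rfl, h⟩, hA⟩
      rwa [mem_cyl.1 hA]
  rw [heq, MeasureTheory.measure_biUnion_finset _ fun ρ _ => measurableSet_cyl ρ]
  · rw [Finset.sum_congr rfl fun ρ hρ => show μ (cyl ρ) = 2⁻¹ ^ s by rw [hμ, (mem_L.1 hρ).1]]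
    rw [Finset.sum_const, List.toFinset_card_of_nodup ((nodup_strs s).filter _), nsmul_eq_mul]
    rfl
  · intro ρ hρ ρ' hρ' hne
    refine Set.disjoint_left.2 fun A hA hA' => hne ?_
    rw [← mem_cyl.1 hA, ← mem_cyl.1 hA', (mem_L.1 hρ).1, (mem_L.1 hρ').1]

theorem inv_two_pow_mul_two_pow (n : ℕ) : (2⁻¹ : ℝ≥0∞) ^ n * 2 ^ n = 1 := by
  rw [← mul_pow, ENNReal.inv_mul_cancel (by simp) (by simp), one_pow]

theorem FairCoin.le_measure_preimage (hμ : FairCoin μ) {H : Str → Str → Prop} {c s : ℕ} {σ : Str}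
    (h : Heavy H c s σ) : (2⁻¹ : ℝ≥0∞) ^ σ.length ≤ 2⁻¹ ^ c * μ (preimage H s σ) := by
  have h' : (2 : ℝ≥0∞) ^ s * 2 ^ c ≤ preimageCount H s σ * 2 ^ σ.length := by
    exact_mod_cast h.le
  rw [hμ.measure_preimage]
  calc (2⁻¹ : ℝ≥0∞) ^ σ.length
      = 2⁻¹ ^ σ.length * (2⁻¹ ^ s * 2 ^ s) * (2⁻¹ ^ c * 2 ^ c) := by
        simp only [inv_two_pow_mul_two_pow, mul_one]
    _ = 2⁻¹ ^ σ.length * 2⁻¹ ^ s * 2⁻¹ ^ c * (2 ^ s * 2 ^ c) := by ring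
    _ ≤ 2⁻¹ ^ σ.length * 2⁻¹ ^ s * 2⁻¹ ^ c * (preimageCount H s σ * 2 ^ σ.length) := by gcongr
    _ = 2⁻¹ ^ c * (preimageCount H s σ * 2⁻¹ ^ s) * (2⁻¹ ^ σ.length * 2 ^ σ.length) := by ring
    _ = _ := by rw [inv_two_pow_mul_two_pow, mul_one]

theorem FairCoin.measure_preimage_le (hμ : FairCoin μ) {H : Str → Str → Prop} {c s : ℕ} {σ : Str}
    (h : ¬ Heavy H c s σ) : μ (preimage H s σ) ≤ 2 ^ c * 2⁻¹ ^ σ.length := by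
  have h' : (preimageCount H s σ : ℝ≥0∞) * 2 ^ σ.length ≤ 2 ^ s * 2 ^ c := by
    exact_mod_cast not_lt.1 h
  rw [hμ.measure_preimage]
  calc (preimageCount H s σ : ℝ≥0∞) * 2⁻¹ ^ s
      = preimageCount H s σ * 2⁻¹ ^ s * (2⁻¹ ^ σ.length * 2 ^ σ.length) := by
        rw [inv_two_pow_mul_two_pow, mul_one]
    _ = 2⁻¹ ^ s * 2⁻¹ ^ σ.length * (preimageCount H s σ * 2 ^ σ.length) := by ring
    _ ≤ 2⁻¹ ^ s * 2⁻¹ ^ σ.length * (2 ^ s * 2 ^ c) := by gcongr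
    _ = 2 ^ c * 2⁻¹ ^ σ.length * (2⁻¹ ^ s * 2 ^ s) := by ring
    _ = _ := by rw [inv_two_pow_mul_two_pow, mul_one]

theorem IsReduction.monotone_preimage {H : Str → Str → Prop} (hH : IsReduction H) (σ : Str) :
    Monotone fun s => preimage H s σ :=
  fun _ _ hst A hA => hH.mono (pre_prefix_pre A hst) hA

/-- The strings with heavy preimage form a Martin-Löf test, so random sequences have a bound. -/
theorem IsReduction.exists_not_heavy {H : Str → Str → Prop} (hH : IsReduction H)
    (hμ : FairCoin μ) {X : Seq} (hX : MLRandom μ X) : ∃ c, ∀ s n, ¬ Heavy H c s (pre X n) := by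
  let S (c : ℕ) : Set Str := {σ | ∃ s, Heavy H c s σ}
  have htest : MLTest μ fun c => ⋃ σ ∈ S c, cyl σ := by
    refine ⟨{p | p.2 ∈ S p.1}, ?_, fun _ => rfl, fun c => ?_⟩
    · refine cePred_of_exists (R := fun p s => Heavy H p.1 s p.2) ?_ fun p => Iff.rfl
      exact hH.primrec_heavy.comp ((Primrec.fst.comp Primrec.fst).pair
        (Primrec.snd.pair (Primrec.snd.comp Primrec.fst)))
    · have hsub : (⋃ σ ∈ S c, cyl σ) ⊆ ⋃ σ ∈ minimals (S c), cyl σ := by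
        intro A hA
        obtain ⟨n, hn⟩ := exists_pre_mem_minimals (by simpa using hA)
        exact Set.mem_biUnion hn (mem_cyl_pre A n)
      have hmeas (σ : Str) : MeasurableSet (⋃ s, preimage H s σ) :=
        .iUnion fun s => measurable_pre s {ρ | H ρ σ}
      have hdisj : Pairwise (Function.onFun Disjoint
          fun σ : minimals (S c) => ⋃ s, preimage H s (σ : Str)) := by
        intro σ τ hne
        refine Set.disjoint_left.2 fun A hA hA' => hne (Subtype.ext ?_)
        obtain ⟨s, hs⟩ := Set.mem_iUnion.1 hA
        obtain ⟨t, ht⟩ := Set.mem_iUnion.1 hA'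
        rcases hH.consistent (hH.monotone_preimage _ (le_max_left s t) hs)
          (hH.monotone_preimage _ (le_max_right s t) ht) with h | h
        · exact eq_of_prefix_of_mem_minimals σ.2 τ.2 h
        · exact (eq_of_prefix_of_mem_minimals τ.2 σ.2 h).symm
      calc μ (⋃ σ ∈ S c, cyl σ) ≤ μ (⋃ σ ∈ minimals (S c), cyl σ) := MeasureTheory.measure_mono hsub
        _ ≤ ∑' σ : minimals (S c), μ (cyl σ) :=
          MeasureTheory.measure_biUnion_le μ (Set.to_countable _) _
        _ ≤ ∑' σ : minimals (S c), 2⁻¹ ^ c * μ (⋃ s, preimage H s (σ : Str)) := by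
          refine ENNReal.tsum_le_tsum fun σ => ?_
          obtain ⟨s, hs⟩ := σ.2.1
          rw [hμ]
          refine (hμ.le_measure_preimage hs).trans ?_
          gcongr
          exact Set.subset_iUnion (fun s => preimage H s (σ : Str)) s
        _ = 2⁻¹ ^ c * ∑' σ : minimals (S c), μ (⋃ s, preimage H s (σ : Str)) :=
          ENNReal.tsum_mul_left
        _ ≤ 2⁻¹ ^ c * μ Set.univ := by
          gcongr
          refine (MeasureTheory.tsum_meas_le_meas_iUnion_of_disjoint μ (fun _ => hmeas _)
            hdisj).trans (MeasureTheory.measure_mono (Set.subset_univ _))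
        _ = 2⁻¹ ^ c := by rw [hμ.measure_univ, mul_one]
  have := hX _ htest
  simp only [Set.mem_iInter, not_forall] at this
  obtain ⟨c, hc⟩ := this
  exact ⟨c, fun s n hs => hc (Set.mem_biUnion (show pre X n ∈ S c from ⟨s, hs⟩) (mem_cyl_pre X n))⟩

/-- The part of the preimage of `σ` that is found before its measure exceeds `2^{c-|σ|}`. -/
def cappedPreimage (H : Str → Str → Prop) (c : ℕ) (σ : Str) : Set Seq :=
  ⋃ s, {A | ¬ Heavy H c s σ ∧ A ∈ preimage H s σ}

theorem IsReduction.measure_cappedPreimage_le {H : Str → Str → Prop} (hH : IsReduction H)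
    (hμ : FairCoin μ) (c : ℕ) (σ : Str) :
    μ (cappedPreimage H c σ) ≤ 2 ^ c * 2⁻¹ ^ σ.length := by
  have hdir : Directed (· ⊆ ·) fun s => {A | ¬ Heavy H c s σ ∧ A ∈ preimage H s σ} := by
    intro s t
    by_cases hs : Heavy H c s σ
    · exact ⟨t, fun A hA => absurd hs hA.1, subset_rfl⟩
    by_cases ht : Heavy H c t σ
    · exact ⟨s, subset_rfl, fun A hA => absurd ht hA.1⟩
    rcases le_total s t with h | h
    · exact ⟨t, fun A hA => ⟨ht, hH.monotone_preimage σ h hA.2⟩, subset_rfl⟩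
    · exact ⟨s, subset_rfl, fun A hA => ⟨hs, hH.monotone_preimage σ h hA.2⟩⟩
  rw [cappedPreimage, hdir.measure_iUnion]
  refine iSup_le fun s => ?_
  by_cases hs : Heavy H c s σ
  · simp [hs]
  · exact (MeasureTheory.measure_mono fun A hA => hA.2).trans (hμ.measure_preimage_le hs)

end Measure

/-! ### Relativized tests -/

/-- The strings `σ` that are seen, using the finite oracle `z |σ|`, to have an initial segment in
the `i`-th set approximated by `D`. -/
def captured (D : Str → ℕ × Str → Prop) (z : ℕ → Str) (i : ℕ) : Set Str :=
  {σ | ∃ j < σ.length + 1, D (z σ.length) (i, σ.take j)}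

theorem primrec_mem_minimals_captured {D : Str → ℕ × Str → Prop} (hD : PrimrecRel D) :
    PrimrecPred fun p : Str × ℕ × Str =>
      p.2.2 ∈ minimals (captured D (fun n => p.1.take n) p.2.1) := by
  have hcap : PrimrecPred fun p : Str × ℕ × Str =>
      p.2.2 ∈ captured D (fun n => p.1.take n) p.2.1 := by
    have hR : PrimrecRel fun (j : ℕ) (p : Str × ℕ × Str) =>
        D (p.1.take p.2.2.length) (p.2.1, p.2.2.take j) := by
      have hσ : Primrec fun q : ℕ × Str × ℕ × Str => q.2.2.2 :=
        Primrec.snd.comp (Primrec.snd.comp Primrec.snd)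
      exact hD.comp (Primrec.list_take.comp (Primrec.list_length.comp hσ)
        (Primrec.fst.comp Primrec.snd)) ((Primrec.fst.comp (Primrec.snd.comp Primrec.snd)).pair
        (Primrec.list_take.comp Primrec.fst hσ))
    exact primrecPred_exists_lt hR (Primrec.succ.comp (Primrec.list_length.comp
      (Primrec.snd.comp Primrec.snd)))
  have hR : PrimrecRel fun (n : ℕ) (p : Str × ℕ × Str) =>
      p.2.2.take n ∉ captured D (fun n => p.1.take n) p.2.1 := by
    refine (hcap.comp (f := fun q : ℕ × Str × ℕ × Str => (q.2.1, q.2.2.1, q.2.2.2.take q.1)) ?_).not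
    exact (Primrec.fst.comp Primrec.snd).pair ((Primrec.fst.comp (Primrec.snd.comp
      Primrec.snd)).pair (Primrec.list_take.comp Primrec.fst
        (Primrec.snd.comp (Primrec.snd.comp Primrec.snd))))
  exact hcap.and (primrecPred_forall_lt hR (Primrec.list_length.comp
    (Primrec.snd.comp Primrec.snd)))

theorem mem_minimals_captured_congr {D : Str → ℕ × Str → Prop} {z z' : ℕ → Str} {i : ℕ} {σ : Str}
    (h : ∀ n ≤ σ.length, z n = z' n) :
    σ ∈ minimals (captured D z i) ↔ σ ∈ minimals (captured D z' i) := by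
  have key {τ : Str} (hτ : τ.length ≤ σ.length) : τ ∈ captured D z i ↔ τ ∈ captured D z' i := by
    simp [captured, h _ hτ]
  exact and_congr (key le_rfl)
    (forall₂_congr fun n _ => not_congr (key (List.length_take_le' n σ)))

theorem iUnion_minimals_captured {D : Str → ℕ × Str → Prop}
    (mono : ∀ {ζ ζ' : Str}, ζ <+: ζ' → ∀ {p}, D ζ p → D ζ' p) {Z : Seq} {W : Set (ℕ × Str)}
    (hW : ∀ p, p ∈ W ↔ ∃ k, D (pre Z k) p) (i : ℕ) :
    ⋃ σ ∈ minimals (captured D (pre Z) i), cyl σ = ⋃ σ ∈ {σ : Str | (i, σ) ∈ W}, cyl σ := by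
  ext A
  constructor
  · intro h
    obtain ⟨σ, ⟨⟨j, hj, hD⟩, -⟩, hA⟩ := Set.mem_iUnion₂.1 h
    refine Set.mem_biUnion (x := σ.take j) ((hW _).2 ⟨_, hD⟩) ?_
    rw [← mem_cyl.1 hA, take_pre A (Nat.lt_succ_iff.1 hj)]
    exact mem_cyl_pre A j
  · intro h
    obtain ⟨σ, hσ, hA⟩ := Set.mem_iUnion₂.1 h
    obtain ⟨k, hk⟩ := (hW _).1 hσ
    have hcap : pre A (max σ.length k) ∈ captured D (pre Z) i := by
      refine ⟨σ.length, by rw [pre_length]; omega, ?_⟩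
      rw [pre_length, take_pre A (le_max_left _ _), mem_cyl.1 hA]
      exact mono (pre_prefix_pre Z (le_max_right _ _)) hk
    obtain ⟨n, hn⟩ := exists_pre_mem_minimals ⟨_, hcap, mem_cyl_pre A _⟩
    exact Set.mem_biUnion hn (mem_cyl_pre A n)

open Encodable in
theorem IsReduction.cePredIn_pullback {H : Str → Str → Prop} (hH : IsReduction H)
    {D : Str → ℕ × Str → Prop} (hD : PrimrecRel D) (Z : Seq) (c : ℕ) :
    CEPredIn (oracleOf Z) fun p : ℕ × Str =>
      ∃ σ ∈ minimals (captured D (pre Z) (p.1 + c)), ¬ Heavy H c p.2.length σ ∧ H p.2 σ := by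
  -- The length of the finite oracle also codes the string `σ` that is tried.
  obtain ⟨str, hstr, hstr_pair⟩ : ∃ str : Str → Str, Primrec str ∧
      ∀ σ n, str (pre Z (Nat.pair (encode σ) n)) = σ :=
    ⟨fun ζ => (decode (α := Str) ζ.length.unpair.1).getD [],
      Primrec.option_getD.comp (Primrec.decode.comp (Primrec.fst.comp
        (Primrec.unpair.comp Primrec.list_length))) (Primrec.const []),
      fun σ n => by simp [pre_length]⟩
  let R (ζ : Str) (p : ℕ × Str) : Prop := (str ζ).length ≤ ζ.length ∧
    str ζ ∈ minimals (captured D (fun n => ζ.take n) (p.1 + c)) ∧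
      ¬ Heavy H c p.2.length (str ζ) ∧ H p.2 (str ζ)
  have hR : PrimrecRel R := by
    have hσ : Primrec fun q : Str × ℕ × Str => str q.1 := hstr.comp Primrec.fst
    have hρ : Primrec fun q : Str × ℕ × Str => q.2.2 := Primrec.snd.comp Primrec.snd
    have hmin : PrimrecPred fun q : Str × ℕ × Str =>
        str q.1 ∈ minimals (captured D (fun n => q.1.take n) (q.2.1 + c)) := by
      have hi : Primrec fun q : Str × ℕ × Str => q.2.1 + c :=
        Primrec.nat_add.comp (Primrec.fst.comp Primrec.snd) (Primrec.const c)
      exact (primrec_mem_minimals_captured hD).comp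
        (f := fun q : Str × ℕ × Str => (q.1, q.2.1 + c, str q.1)) (Primrec.fst.pair (hi.pair hσ))
    have hheavy : PrimrecPred fun q : Str × ℕ × Str => Heavy H c q.2.2.length (str q.1) :=
      hH.primrec_heavy.comp (f := fun q : Str × ℕ × Str => (c, q.2.2.length, str q.1))
        ((Primrec.const c).pair ((Primrec.list_length.comp hρ).pair hσ))
    exact (Primrec.nat_le.comp (Primrec.list_length.comp hσ)
      (Primrec.list_length.comp Primrec.fst)).and
      (hmin.and (hheavy.not.and (hH.primrec.comp hρ hσ)))
  refine cePredIn_of_exists hR fun p => ?_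
  have hcongr {k : ℕ} {σ : Str} (hk : σ.length ≤ k) :
      σ ∈ minimals (captured D (fun n => (pre Z k).take n) (p.1 + c)) ↔
        σ ∈ minimals (captured D (pre Z) (p.1 + c)) :=
    mem_minimals_captured_congr fun n hn => take_pre Z (hn.trans hk)
  constructor
  · rintro ⟨σ, hσ, hrest⟩
    have hk : σ.length ≤ Nat.pair (encode σ) σ.length := Nat.right_le_pair _ _
    refine ⟨Nat.pair (encode σ) σ.length, ?_⟩
    simp only [R, hstr_pair, pre_length]
    exact ⟨hk, (hcongr hk).2 hσ, hrest⟩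
  · rintro ⟨k, hk, hσ, hrest⟩
    rw [pre_length] at hk
    exact ⟨_, (hcongr hk).1 hσ, hrest⟩

theorem IsReduction.measure_iUnion_cappedPreimage_le {μ : MeasureTheory.Measure Seq}
    {H : Str → Str → Prop} (hH : IsReduction H) (hμ : FairCoin μ) (c : ℕ) (S : Set Str) :
    μ (⋃ σ ∈ minimals S, cappedPreimage H c σ) ≤ 2 ^ c * μ (⋃ σ ∈ minimals S, cyl σ) :=
  calc μ (⋃ σ ∈ minimals S, cappedPreimage H c σ)
      ≤ ∑' σ : minimals S, μ (cappedPreimage H c σ) :=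
        MeasureTheory.measure_biUnion_le μ (Set.to_countable _) _
    _ ≤ ∑' σ : minimals S, 2 ^ c * μ (cyl σ) :=
        ENNReal.tsum_le_tsum fun σ => (hμ σ).symm ▸ hH.measure_cappedPreimage_le hμ c σ
    _ = 2 ^ c * ∑' σ : minimals S, μ (cyl σ) := ENNReal.tsum_mul_left
    _ = 2 ^ c * μ (⋃ σ ∈ minimals S, cyl σ) := by
        rw [MeasureTheory.measure_biUnion (Set.to_countable _) disjoint_cyl_of_mem_minimals
          fun σ _ => measurableSet_cyl σ]

theorem iUnion_cyl_pullback (H : Str → Str → Prop) (c : ℕ) (S : Set Str) :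
    ⋃ ρ ∈ {ρ : Str | ∃ σ ∈ S, ¬ Heavy H c ρ.length σ ∧ H ρ σ}, cyl ρ =
      ⋃ σ ∈ S, cappedPreimage H c σ := by
  ext A
  simp only [cappedPreimage, preimage, Set.mem_iUnion, Set.mem_ofPred_eq, exists_prop]
  constructor
  · rintro ⟨ρ, ⟨σ, hσ, hheavy, hρ⟩, hA⟩
    exact ⟨σ, hσ, ρ.length, hheavy, (mem_cyl.1 hA).symm ▸ hρ⟩
  · rintro ⟨σ, hσ, s, hheavy, hA⟩
    exact ⟨pre A s, ⟨σ, hσ, (pre_length A s).symm ▸ hheavy, hA⟩, mem_cyl_pre A s⟩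

theorem CEPredIn.exists_approx {A : Seq} {α : Type*} [Primcodable α] {p : α → Prop}
    (hp : CEPredIn (oracleOf A) p) :
    ∃ D : Str → α → Prop, PrimrecRel D ∧
      (∀ {ζ ζ' : Str}, ζ <+: ζ' → ∀ {a}, D ζ a → D ζ' a) ∧ ∀ a, p a ↔ ∃ k, D (pre A k) a := by
  obtain ⟨G, hG, mono, -, spec⟩ := RecIn.exists_approx hp
  refine ⟨fun ζ a => G ζ (Encodable.encode a, 0), ?_, fun h _ => mono h, fun a => ?_⟩
  · exact hG.comp Primrec.fst ((Primrec.encode.comp Primrec.snd).pair (Primrec.const 0))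
  · rw [← spec]
    simpa using fun _ => ⟨(), rfl⟩

/-- **The XYZ theorem** (Miller–Yu): if `X` is Martin-Löf random, `X ≤_T Y`, and `Y`
is Martin-Löf random relative to `Z`, then `X` is Martin-Löf random relative to `Z`. -/
theorem xyz_theorem (μ : MeasureTheory.Measure Seq) (hμ : FairCoin μ)
    (X Y Z : Seq) (hX : MLRandom μ X) (hXY : SeqTuringLE X Y)
    (hY : MLRandomIn (oracleOf Z) μ Y) :
    MLRandomIn (oracleOf Z) μ X := by
  obtain ⟨H, hH, hXY⟩ := hXY.exists_isReduction
  obtain ⟨c, hc⟩ := hH.exists_not_heavy hμ hX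
  rintro U ⟨W, hW, hU, hUμ⟩ hXU
  obtain ⟨D, hD, mono, hWD⟩ := hW.exists_approx
  have hUD (i : ℕ) : U i = ⋃ σ ∈ minimals (captured D (pre Z) i), cyl σ :=
    (hU i).trans (iUnion_minimals_captured mono hWD i).symm
  let V (i : ℕ) : Set Seq := ⋃ σ ∈ minimals (captured D (pre Z) (i + c)), cappedPreimage H c σ
  refine hY V ⟨_, hH.cePredIn_pullback hD Z c, fun i => ?_, fun i => ?_⟩ ?_
  · exact (iUnion_cyl_pullback H c _).symm
  · calc μ (V i) ≤ 2 ^ c * μ (U (i + c)) := hUD (i + c) ▸ hH.measure_iUnion_cappedPreimage_le hμ c _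
      _ ≤ 2 ^ c * 2⁻¹ ^ (i + c) := by
        gcongr
        exact hUμ (i + c)
      _ = 2⁻¹ ^ i * (2⁻¹ ^ c * 2 ^ c) := by ring
      _ = 2⁻¹ ^ i := by rw [inv_two_pow_mul_two_pow, mul_one]
  · refine Set.mem_iInter.2 fun i => ?_
    have hX' := hUD (i + c) ▸ Set.mem_iInter.1 hXU (i + c)
    obtain ⟨σ, hσ, hXσ⟩ := Set.mem_iUnion₂.1 hX'
    obtain ⟨k, hk⟩ := hXY σ.length
    have hσc := hc k σ.length
    rw [mem_cyl.1 hXσ] at hk hσc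
    exact Set.mem_biUnion hσ (Set.mem_iUnion.2 ⟨k, hσc, hk⟩)

end AR
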